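/- Let t ≤ m be positive integers, F = GaloisField 2 m, T = GaloisField 2 t. Let ⋆ be a left pre-quasifield operation on F, d : F → F → F a right-division map for ⋆, and γ : F → T balanced. Then f : F × F → T defined by f(x,y) = γ(d(x,y)) is a (2m,t)-bent function. -/

import Mathlib

noncomputable instance (n : ℕ) : Fintype (GaloisField 2 n) := Fintype.ofFinite _

/-- The sign character of `ZMod 2`: `chi 0 = 1`, `chi 1 = -1`. -/
def chi (x : ZMod 2) : ℤ := if x = 0 then 1 else -1

theorem chi_zero : chi 0 = 1 := rfl

theorem chi_add (x y : ZMod 2) : chi (x + y) = chi x * chi y := by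
  revert x y; decide

theorem chi_sq (x : ZMod 2) : chi x ^ 2 = 1 := by
  revert x; decide

/-- `chi` as an additive character. -/
def chiAddChar : AddChar (ZMod 2) ℤ where
  toFun := chi
  map_zero_eq_one' := chi_zero
  map_add_eq_mul' := chi_add

open Classical in
/-- Orthogonality: the sum of `chi ∘ φ` is the group order if `φ = 0` and vanishes otherwise. -/
theorem sum_chi_addMonoidHom {V : Type*} [AddCommGroup V] [Fintype V] (φ : V →+ ZMod 2) :
    ∑ y, chi (φ y) = if φ = 0 then (Fintype.card V : ℤ) else 0 := by
  split_ifs with h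
  · simp [h, chi_zero]
  · have hne : chiAddChar.compAddMonoidHom φ ≠ 0 := by
      intro h0
      refine h (AddMonoidHom.ext fun y => ?_)
      have hy : chi (φ y) = 1 := DFunLike.congr_fun h0 y
      have chi_eq_one : ∀ x : ZMod 2, chi x = 1 → x = 0 := by decide
      exact chi_eq_one _ hy
    exact AddChar.sum_eq_zero_iff_ne_zero.2 hne

section Spread

variable {V : Type*} [AddCommGroup V] {star d : V → V → V}

/-- The functional `y ↦ α (s ⋆ y) + β y`, the restriction of `(α, β)` to the spread element
`{(s ⋆ y, y)}`. -/
def spreadFunctional (hdist : ∀ x y z, star x (y + z) = star x y + star x z)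
    (α β : V →+ ZMod 2) (s : V) : V →+ ZMod 2 :=
  α.comp (AddMonoidHom.mk' (star s) (hdist s)) + β

theorem spreadFunctional_apply (hdist : ∀ x y z, star x (y + z) = star x y + star x z)
    (α β : V →+ ZMod 2) (s y : V) :
    spreadFunctional hdist α β s y = α (star s y) + β y := rfl

/-- A character sum over `V × V` weighted by a function of the quotient `d x y`, split along the
spread. -/
theorem sum_spread [Fintype V] (hdist : ∀ x y z, star x (y + z) = star x y + star x z)
    (hbij : ∀ a, a ≠ 0 → Function.Bijective fun x => star x a)
    (hd0 : ∀ x, d x 0 = 0) (hdiv : ∀ x y, y ≠ 0 → star (d x y) y = x)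
    (α β : V →+ ZMod 2) (g : V → ℤ) :
    ∑ p : V × V, g (d p.1 p.2) * chi (α p.1 + β p.2) =
      ∑ s, g s * ((∑ y, chi (spreadFunctional hdist α β s y)) - 1) + g 0 * ∑ x, chi (α x) := by
  classical
  have hcol : ∀ y ∈ Finset.univ.erase (0 : V),
      ∑ x, g (d x y) * chi (α x + β y) = ∑ s, g s * chi (spreadFunctional hdist α β s y) := by
    intro y hy
    have hy0 : y ≠ 0 := Finset.ne_of_mem_erase hy
    refine ((hbij y hy0).sum_comp fun x => g (d x y) * chi (α x + β y)).symm.trans ?_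
    refine Finset.sum_congr rfl fun s _ => ?_
    have hs : d (star s y) y = s := (hbij y hy0).1 (hdiv _ _ hy0)
    simp only [hs, spreadFunctional_apply]
  have hrow (s : V) : ∑ y ∈ Finset.univ.erase (0 : V), chi (spreadFunctional hdist α β s y) =
      (∑ y, chi (spreadFunctional hdist α β s y)) - 1 := by
    rw [← Finset.add_sum_erase _ _ (Finset.mem_univ (0 : V)), map_zero, chi_zero]
    ring
  rw [Fintype.sum_prod_type_right, ← Finset.sum_erase_add _ _ (Finset.mem_univ (0 : V)),
    Finset.sum_congr rfl hcol, Finset.sum_comm]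
  simp only [← Finset.mul_sum, hrow, hd0, map_zero, add_zero]

/-- A weight of total sum zero gives a character sum equal to `|V|` times one of its values. -/
theorem exists_sum_spread_eq [Fintype V] (hdist : ∀ x y z, star x (y + z) = star x y + star x z)
    (hbij : ∀ a, a ≠ 0 → Function.Bijective fun x => star x a)
    (hd0 : ∀ x, d x 0 = 0) (hdiv : ∀ x y, y ≠ 0 → star (d x y) y = x)
    (α β : V →+ ZMod 2) (g : V → ℤ) (hg : ∑ s, g s = 0) :
    ∃ s, ∑ p : V × V, g (d p.1 p.2) * chi (α p.1 + β p.2) = Fintype.card V * g s := by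
  classical
  have hq : (Fintype.card V : ℤ) ≠ 0 := by exact_mod_cast Fintype.card_ne_zero
  rw [sum_spread hdist hbij hd0 hdiv]
  simp only [mul_sub, mul_one, Finset.sum_sub_distrib, hg, sub_zero]
  by_cases hα : α = 0
  · subst hα
    have hconst (s : V) : spreadFunctional hdist 0 β s = β := by
      ext y; simp [spreadFunctional_apply]
    refine ⟨0, ?_⟩
    simp only [hconst, ← Finset.sum_mul, hg, sum_chi_addMonoidHom (0 : V →+ ZMod 2), if_true]
    ring
  · have hα0 : ∑ x, chi (α x) = 0 := by rw [sum_chi_addMonoidHom, if_neg hα]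
    have hcount := sum_spread hdist hbij hd0 hdiv α β fun _ => 1
    simp only [one_mul, Fintype.sum_prod_type, chi_add, ← Finset.mul_sum, ← Finset.sum_mul, hα0,
      zero_mul, add_zero, Finset.sum_sub_distrib, sum_chi_addMonoidHom (spreadFunctional _ _ _ _),
      Finset.sum_ite, Finset.sum_const, nsmul_eq_mul, Finset.card_univ,
      mul_one] at hcount
    have hcard : (Finset.univ.filter fun s => spreadFunctional hdist α β s = 0).card = 1 := by
      have h : (((Finset.univ.filter fun s => spreadFunctional hdist α β s = 0).card : ℤ) - 1) *
          Fintype.card V = 0 := by linarith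
      have := (mul_eq_zero.1 h).resolve_right hq
      omega
    obtain ⟨s, hs⟩ := Finset.card_eq_one.1 hcard
    refine ⟨s, ?_⟩
    simp only [hα0, mul_zero, add_zero, sum_chi_addMonoidHom (spreadFunctional _ _ _ _), mul_ite]
    rw [← Finset.sum_filter, hs, Finset.sum_singleton, mul_comm]

end Spread

/-- The functional `x ↦ Tr (a * x)`. -/
noncomputable def traceMul {n : ℕ} (a : GaloisField 2 n) : GaloisField 2 n →+ ZMod 2 :=
  (Algebra.trace (ZMod 2) (GaloisField 2 n)).toAddMonoidHom.comp (AddMonoidHom.mulLeft a)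

theorem traceMul_apply {n : ℕ} (a x : GaloisField 2 n) :
    traceMul a x = Algebra.trace (ZMod 2) (GaloisField 2 n) (a * x) := rfl

theorem traceMul_ne_zero {n : ℕ} {a : GaloisField 2 n} (ha : a ≠ 0) : traceMul a ≠ 0 := by
  intro h
  exact ha ((traceForm_nondegenerate (ZMod 2) (GaloisField 2 n)).1 a
    fun x => DFunLike.congr_fun h x)

/-- Every nonzero component of a map with fibers of equal size has vanishing character sum. -/
theorem sum_chi_traceMul_comp_eq_zero {V : Type*} [Fintype V] {t k : ℕ}
    {γ : V → GaloisField 2 t} (hγ : ∀ b, {a | γ a = b}.ncard = k)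
    {u : GaloisField 2 t} (hu : u ≠ 0) : ∑ s, chi (traceMul u (γ s)) = 0 := by
  classical
  have hfiber (b : GaloisField 2 t) : (Finset.univ.filter fun s => γ s = b).card = k := by
    rw [← hγ b, ← Set.ncard_coe_finset]
    simp
  rw [← Finset.sum_fiberwise' Finset.univ γ fun b => chi (traceMul u b)]
  simp only [Finset.sum_const, hfiber, ← Finset.smul_sum]
  rw [sum_chi_addMonoidHom, if_neg (traceMul_ne_zero hu), smul_zero]

theorem dillon_type_is_bent
    (m t : ℕ) (hm : 0 < m) (ht : 0 < t) (htm : t ≤ m)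
    (star : GaloisField 2 m → GaloisField 2 m → GaloisField 2 m)
    (hz1 : ∀ x, star x 0 = 0) (hz2 : ∀ x, star 0 x = 0)
    (hdist : ∀ x y z, star x (y + z) = star x y + star x z)
    (hbij1 : ∀ a, a ≠ 0 → Function.Bijective fun x => star x a)
    (hbij2 : ∀ a, a ≠ 0 → Function.Bijective fun x => star a x)
    (d : GaloisField 2 m → GaloisField 2 m → GaloisField 2 m)
    (hd0 : ∀ x, d x 0 = 0)
    (hdiv : ∀ x y, y ≠ 0 → star (d x y) y = x)
    (γ : GaloisField 2 m → GaloisField 2 t)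
    (hγ : ∀ b, {a | γ a = b}.ncard = 2 ^ (m - t)) :
    ∀ u : GaloisField 2 t, u ≠ 0 → ∀ a b : GaloisField 2 m,
      (∑ p : GaloisField 2 m × GaloisField 2 m,
          chi (Algebra.trace (ZMod 2) (GaloisField 2 t) (u * γ (d p.1 p.2)) +
               Algebra.trace (ZMod 2) (GaloisField 2 m) (a * p.1) +
               Algebra.trace (ZMod 2) (GaloisField 2 m) (b * p.2))) ^ 2
        = 2 ^ (2 * m) := by
  intro u hu a b
  obtain ⟨s, hs⟩ := exists_sum_spread_eq hdist hbij1 hd0 hdiv (traceMul a) (traceMul b)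
    (fun s => chi (traceMul u (γ s))) (sum_chi_traceMul_comp_eq_zero hγ hu)
  have hcard : Fintype.card (GaloisField 2 m) = 2 ^ m := by
    rw [← Nat.card_eq_fintype_card, GaloisField.card 2 m hm.ne']
  simp only [← chi_add, ← add_assoc, traceMul_apply] at hs
  rw [hs, mul_pow, chi_sq, hcard]
  push_cast
  ring
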